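/- Let κ ≥ 0. (i) For every η ≥ −κ² the equation η − G(y) + κ²P₋(y) = 0 has a unique solution y = ρ₊(η,κ) in [1,∞), and η ↦ ρ₊(η,κ) is increasing on [−κ², ∞) with ρ₊(−κ²,κ) = 1. (ii) For every η ≤ −κ² the equation η + G(y) + κ²P₊(y) = 0 has a unique solution y = ρ₋(η,κ) in [1,∞), and η ↦ ρ₋(η,κ) is decreasing on (−∞, −κ²] with ρ₋(−κ²,κ) = 1. In particular, for fixed κ ≥ 0 the resulting map η ↦ ρ(η,κ) (defined piecewise by ρ₋ for η ≤ −κ² and ρ₊ for η ≥ −κ²) maps ℝ onto [1,∞) in a 2-to-1 fashion away from its minimum ρ(−κ²,κ) = 1. -/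

import Mathlib

/-! With `F₊ = G - κ² P₋` and `F₋ = G + κ² P₊`, the two equations read `F₊ y = η` and
`F₋ y = -η`. Both functions are continuous and strictly increasing on `[1, ∞)`, since `G` and
`P₊` are strictly increasing there and `P₋ = 1 / P₊`. They are bounded below by
`y - 1 - κ²`, because `√(y(y-1)) ≥ y - 1`, so each is a bijection of `[1, ∞)` onto
`[F 1, ∞)`, with `F₊ 1 = -κ²` and `F₋ 1 = κ²`. The functions `ρ₊` and `η ↦ ρ₋ (-η)` are the
inverses, provided by `exists_inverse_Ici`. -/

noncomputable section

/-- `G(y) = √(y(y−1)) + ln(√y + √(y−1))`. -/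
def Gf (y : ℝ) : ℝ := Real.sqrt (y * (y - 1)) + Real.log (Real.sqrt y + Real.sqrt (y - 1))

/-- `P₊(y) = 2y − 1 + 2√(y(y−1))`. -/
def Pp (y : ℝ) : ℝ := 2 * y - 1 + 2 * Real.sqrt (y * (y - 1))

/-- `P₋(y) = 2y − 1 − 2√(y(y−1))`. -/
def Pm (y : ℝ) : ℝ := 2 * y - 1 - 2 * Real.sqrt (y * (y - 1))

/-- A continuous strictly increasing function on `[1, ∞)` with at least linear growth has a
strictly increasing inverse on `[F 1, ∞)`. -/
lemma exists_inverse_Ici (F : ℝ → ℝ) (c : ℝ) (hcont : ContinuousOn F (Set.Ici 1))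
    (hmono : StrictMonoOn F (Set.Ici 1)) (hgrow : ∀ y, 1 ≤ y → y - c ≤ F y) :
    ∃ r : ℝ → ℝ, (∀ t, F 1 ≤ t → 1 ≤ r t ∧ F (r t) = t) ∧
      (∀ y, 1 ≤ y → r (F y) = y) ∧ StrictMonoOn r (Set.Ici (F 1)) := by
  have hex : ∀ t, ∃ y, F 1 ≤ t → 1 ≤ y ∧ F y = t := by
    intro t
    by_cases ht : F 1 ≤ t
    · have hb : t ≤ F (max 1 (t + c)) := by
        have := hgrow _ (le_max_left 1 (t + c))
        have := le_max_right 1 (t + c)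
        linarith
      obtain ⟨y, hy, hFy⟩ := intermediate_value_Icc (le_max_left 1 (t + c))
        (hcont.mono Set.Icc_subset_Ici_self) ⟨ht, hb⟩
      exact ⟨y, fun _ => ⟨hy.1, hFy⟩⟩
    · exact ⟨0, fun h => absurd h ht⟩
  choose r hr using hex
  refine ⟨r, hr, fun y hy => ?_, fun s hs t ht hst => ?_⟩
  · obtain ⟨h1, h2⟩ := hr (F y) (hmono.monotoneOn Set.self_mem_Ici hy hy)
    exact hmono.injOn h1 hy h2
  · obtain ⟨h1, h2⟩ := hr s hs
    obtain ⟨h3, h4⟩ := hr t ht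
    exact (hmono.lt_iff_lt h1 h3).1 (by rwa [h2, h4])

lemma Gf_strictMonoOn : StrictMonoOn Gf (Set.Ici 1) := by
  intro x hx y hy hxy
  simp only [Set.mem_Ici] at hx hy
  have h1 : Real.sqrt (x * (x - 1)) < Real.sqrt (y * (y - 1)) :=
    Real.sqrt_lt_sqrt (by nlinarith) (by nlinarith)
  have h2 : Real.sqrt x < Real.sqrt y := Real.sqrt_lt_sqrt (by linarith) hxy
  have h3 : Real.sqrt (x - 1) < Real.sqrt (y - 1) :=
    Real.sqrt_lt_sqrt (by linarith) (by linarith)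
  have h4 : 0 < Real.sqrt x := Real.sqrt_pos.2 (by linarith)
  have h5 := Real.sqrt_nonneg (x - 1)
  exact add_lt_add h1 (Real.log_lt_log (by linarith) (by linarith))

lemma Gf_continuousOn : ContinuousOn Gf (Set.Ici 1) := by
  unfold Gf
  refine ContinuousOn.add (by fun_prop) (ContinuousOn.log (by fun_prop) fun y hy => ?_)
  have h1 : 0 < Real.sqrt y := Real.sqrt_pos.2 (zero_lt_one.trans_le hy)
  exact (add_pos_of_pos_of_nonneg h1 (Real.sqrt_nonneg _)).ne'

lemma Gf_ge (y : ℝ) (hy : 1 ≤ y) : y - 1 ≤ Gf y := by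
  have h1 : y - 1 ≤ Real.sqrt (y * (y - 1)) := Real.le_sqrt_of_sq_le (by nlinarith)
  have h2 : 1 ≤ Real.sqrt y := Real.one_le_sqrt.2 hy
  have h3 := Real.log_nonneg (by linarith [Real.sqrt_nonneg (y - 1)] :
    1 ≤ Real.sqrt y + Real.sqrt (y - 1))
  unfold Gf
  linarith

lemma Pp_strictMonoOn : StrictMonoOn Pp (Set.Ici 1) := by
  intro x hx y hy hxy
  simp only [Set.mem_Ici] at hx hy
  have h1 : Real.sqrt (x * (x - 1)) < Real.sqrt (y * (y - 1)) :=
    Real.sqrt_lt_sqrt (by nlinarith) (by nlinarith)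
  unfold Pp
  linarith

lemma one_le_Pp (y : ℝ) (hy : 1 ≤ y) : 1 ≤ Pp y := by
  unfold Pp
  linarith [Real.sqrt_nonneg (y * (y - 1))]

lemma Pm_eq_inv (y : ℝ) (hy : 1 ≤ y) : Pm y = (Pp y)⁻¹ := by
  have hs := Real.sq_sqrt (show 0 ≤ y * (y - 1) by nlinarith)
  apply eq_inv_of_mul_eq_one_left
  unfold Pm Pp
  linear_combination -4 * hs

lemma Pm_antitoneOn : AntitoneOn Pm (Set.Ici 1) := by
  intro x hx y hy hxy
  have h := one_le_Pp x hx
  rw [Pm_eq_inv x hx, Pm_eq_inv y hy]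
  exact inv_anti₀ (by linarith) (Pp_strictMonoOn.monotoneOn hx hy hxy)

/-- For `κ ≥ 0`: (i) for each `η ≥ −κ²` the equation `η − G(y) + κ²P₋(y) = 0` has a unique
solution `ρ₊(η) ∈ [1,∞)`, increasing in `η` with `ρ₊(−κ²) = 1`; (ii) for each `η ≤ −κ²`
the equation `η + G(y) + κ²P₊(y) = 0` has a unique solution `ρ₋(η) ∈ [1,∞)`, decreasing
in `η` with `ρ₋(−κ²) = 1`.  In particular the resulting map `η ↦ ρ(η,κ)` maps `ℝ` onto
`[1,∞)` in a 2-to-1 fashion away from its minimum. -/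
theorem rho_implicit_function (κ : ℝ) (hκ : 0 ≤ κ) :
    ∃ ρp ρm : ℝ → ℝ,
      (∀ η, -κ ^ 2 ≤ η →
        (1 ≤ ρp η ∧ η - Gf (ρp η) + κ ^ 2 * Pm (ρp η) = 0 ∧
          ∀ y, 1 ≤ y → η - Gf y + κ ^ 2 * Pm y = 0 → y = ρp η)) ∧
      StrictMonoOn ρp (Set.Ici (-κ ^ 2)) ∧ ρp (-κ ^ 2) = 1 ∧
      (∀ η, η ≤ -κ ^ 2 →
        (1 ≤ ρm η ∧ η + Gf (ρm η) + κ ^ 2 * Pp (ρm η) = 0 ∧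
          ∀ y, 1 ≤ y → η + Gf y + κ ^ 2 * Pp y = 0 → y = ρm η)) ∧
      StrictAntiOn ρm (Set.Iic (-κ ^ 2)) ∧ ρm (-κ ^ 2) = 1 ∧
      (∀ y, 1 < y → ∃ η₁ η₂, η₁ < -κ ^ 2 ∧ -κ ^ 2 < η₂ ∧ ρm η₁ = y ∧ ρp η₂ = y) := by
  have hG1 : Gf 1 = 0 := by simp [Gf]
  have hP1 : Pp 1 = 1 := by norm_num [Pp]
  have hM1 : Pm 1 = 1 := by norm_num [Pm]
  have hk : 0 ≤ κ ^ 2 := sq_nonneg κ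
  obtain ⟨rp, hrp, hrp', hrpm⟩ := exists_inverse_Ici (fun y => Gf y - κ ^ 2 * Pm y) (1 + κ ^ 2)
    (Gf_continuousOn.sub (continuousOn_const.mul (by unfold Pm; fun_prop)))
    (fun x hx y hy hxy => by
      have h1 := Gf_strictMonoOn hx hy hxy
      have h2 := mul_le_mul_of_nonneg_left (Pm_antitoneOn hx hy hxy.le) hk
      simp only
      linarith)
    (fun y hy => by
      have h1 := Gf_ge y hy
      have h2 := mul_le_mul_of_nonneg_left (Pm_antitoneOn Set.self_mem_Ici hy hy) hk
      rw [hM1] at h2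
      linarith)
  obtain ⟨rm, hrm, hrm', hrmm⟩ := exists_inverse_Ici (fun y => Gf y + κ ^ 2 * Pp y) 1
    (Gf_continuousOn.add (continuousOn_const.mul (by unfold Pp; fun_prop)))
    (fun x hx y hy hxy => by
      have h1 := Gf_strictMonoOn hx hy hxy
      have h2 := mul_le_mul_of_nonneg_left (Pp_strictMonoOn hx hy hxy).le hk
      simp only
      linarith)
    (fun y hy => by
      have h1 := Gf_ge y hy
      have h2 := mul_nonneg hk (zero_le_one.trans (one_le_Pp y hy))
      linarith)
  have ep : Gf 1 - κ ^ 2 * Pm 1 = -κ ^ 2 := by rw [hG1, hM1]; ring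
  have em : Gf 1 + κ ^ 2 * Pp 1 = κ ^ 2 := by rw [hG1, hP1]; ring
  have hp1 := hrp' 1 le_rfl
  have hm1 := hrm' 1 le_rfl
  simp only [ep, em] at hrp hrpm hrm hrmm hp1 hm1
  refine ⟨rp, fun η => rm (-η), fun η hη => ?_, hrpm, hp1, fun η hη => ?_,
    fun s hs t ht hst => ?_, by simpa using hm1, fun y hy => ?_⟩
  · obtain ⟨h1, h2⟩ := hrp η hη
    refine ⟨h1, by linarith, fun y hy h => ?_⟩
    rw [← hrp' y hy]
    congr 1
    linarith
  · obtain ⟨h1, h2⟩ := hrm (-η) (by linarith)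
    refine ⟨h1, by linarith, fun y hy h => ?_⟩
    rw [← hrm' y hy]
    congr 1
    linarith
  · simp only [Set.mem_Iic] at hs ht
    exact hrmm (by simp only [Set.mem_Ici]; linarith) (by simp only [Set.mem_Ici]; linarith)
      (neg_lt_neg hst)
  · have h1 := Gf_strictMonoOn Set.self_mem_Ici hy.le hy
    have h2 := mul_le_mul_of_nonneg_left (Pm_antitoneOn Set.self_mem_Ici hy.le hy.le) hk
    have h3 := mul_le_mul_of_nonneg_left (one_le_Pp y hy.le) hk
    rw [hG1] at h1
    rw [hM1] at h2
    exact ⟨-(Gf y + κ ^ 2 * Pp y), Gf y - κ ^ 2 * Pm y, by linarith, by linarith,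
      by simpa using hrm' y hy.le, hrp' y hy.le⟩
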